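/- There exist functions h₁, h₂, h₃, h₀, smooth in (ε, α, R, τ, F̄) ∈ [0,1] × ℝ × (0,∞) × (0,∞) × ℝ and 2π-periodic in α, such that for every ε ∈ (0,1] and every C^∞ function F(σ,α,τ) on ℝ × ℝ × (0,∞), 2π-periodic in α, the function w(x,t) = (ε/r^{1/2})·F(r − t, α(x), ε·t^{1/2}) satisfies, at every point with r = |x| > 0 and t > 0: (r/ε²)·P(w) = −F·F_{σσ} − ((R^{1/2} − ε²F)/τ)·(F_{στ} − (ε²/(4τ))·F_{ττ}) − ε²·R^{−3/2}·F_{αα} − (F_σ − (ε²/(2τ))·F_τ)² + ε²·(h₁·F_σ + h₂·F_α + h₃·F_τ) + ε²·h₀, where all derivatives of F and the arguments of h₁, h₂, h₃, h₀ are evaluated at σ = r − t, α = α(x), τ = ε·t^{1/2}, F̄ = F(σ,α,τ), and R = τ² + ε²σ (which equals ε²r > 0 at these arguments). -/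

import Mathlib

noncomputable section

/-- Partial derivative in coordinate `i` of a function on `ℝ × ℝ × ℝ`. -/
def pd (i : Fin 3) (f : ℝ × ℝ × ℝ → ℝ) (p : ℝ × ℝ × ℝ) : ℝ :=
  if i = 0 then deriv (fun s => f (s, p.2.1, p.2.2)) p.1
  else if i = 1 then deriv (fun s => f (p.1, s, p.2.2)) p.2.1
  else deriv (fun s => f (p.1, p.2.1, s)) p.2.2

/-- The polar angle of `x ∈ ℝ²`. -/
def polarAngle (x : ℝ × ℝ) : ℝ := Complex.arg (x.1 + x.2 * Complex.I)

/-- The conservative wave operator `P(w) = ∂_t²w − Δw − ½ ∂_t²(w²)`,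
with coordinates `(x₁, x₂, t)`. -/
def Pop (w : ℝ × ℝ × ℝ → ℝ) (p : ℝ × ℝ × ℝ) : ℝ :=
  pd 2 (pd 2 w) p - (pd 0 (pd 0 w) p + pd 1 (pd 1 w) p) -
    (1 / 2) * pd 2 (pd 2 fun q => w q ^ 2) p

/-- The normalized operator `P̃(F)` of Lemma II.2 (coordinates `(σ, α, τ)`,
`R = τ² + ε²σ`, the `h`'s evaluated at `(ε, α, R, τ, F)`). -/
def Ptilde (h1 h2 h3 h0 : ℝ × ℝ × ℝ × ℝ × ℝ → ℝ) (ε : ℝ) (F : ℝ × ℝ × ℝ → ℝ)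
    (p : ℝ × ℝ × ℝ) : ℝ :=
  -(F p * pd 0 (pd 0 F) p) -
    ((Real.sqrt (p.2.2 ^ 2 + ε ^ 2 * p.1) - ε ^ 2 * F p) / p.2.2) *
      (pd 2 (pd 0 F) p - (ε ^ 2 / (4 * p.2.2)) * pd 2 (pd 2 F) p) -
    ε ^ 2 * (p.2.2 ^ 2 + ε ^ 2 * p.1) ^ (-(3 : ℝ) / 2) * pd 1 (pd 1 F) p -
    (pd 0 F p - (ε ^ 2 / (2 * p.2.2)) * pd 2 F p) ^ 2 +
    ε ^ 2 * (h1 (ε, p.2.1, p.2.2 ^ 2 + ε ^ 2 * p.1, p.2.2, F p) * pd 0 F p +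
      h2 (ε, p.2.1, p.2.2 ^ 2 + ε ^ 2 * p.1, p.2.2, F p) * pd 1 F p +
      h3 (ε, p.2.1, p.2.2 ^ 2 + ε ^ 2 * p.1, p.2.2, F p) * pd 2 F p) +
    ε ^ 2 * h0 (ε, p.2.1, p.2.2 ^ 2 + ε ^ 2 * p.1, p.2.2, F p)

/-- Smoothness of the coefficients `h` on `[0,1] × ℝ × (0,∞) × (0,∞) × ℝ`. -/
def SmoothCoeff (h : ℝ × ℝ × ℝ × ℝ × ℝ → ℝ) : Prop :=
  ContDiffOn ℝ (⊤ : ℕ∞) h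
    {q : ℝ × ℝ × ℝ × ℝ × ℝ | q.1 ∈ Set.Icc 0 1 ∧ 0 < q.2.2.1 ∧ 0 < q.2.2.2.1} ∧
  ∀ e a R τ f : ℝ, h (e, a + 2 * Real.pi, R, τ, f) = h (e, a, R, τ, f)

/-!
In polar coordinates the amplitude `r ^ (-1/2)` conjugates the radial Laplacian `∂_r² + r⁻¹ ∂_r` to
`∂_r² + 1 / (4 r²)`, while `∂_t` acts on the profile as `-∂_σ + (ε² / (2τ)) ∂_τ`. Hence `F_σσ`
cancels in `∂_t² - Δ`, no first-order spatial terms survive, and `-½ ∂_t²(w²)` contributes the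
quadratic terms. Since `√R = ε √r`, multiplying by `r / ε²` gives the normalized operator with
`h₁ = h₂ = 0`, with `h₃` coming from the second derivative of `t ^ (1/2)` and `h₀` from the
potential `1 / (4 r²)`.

The polar angle jumps across the negative real axis, but a profile that is periodic in the angle
does not see which branch is used, so near each point one may differentiate along a smooth branch.
-/

open Filter Topology

/-- `f` is differentiable near `s`, its derivative at `s` is `f'`, and its derivative is itself
differentiable at `s` with derivative `f''`: the two-jet analogue of `HasDerivAt`. -/
def HasSecondDerivAt {𝕜 : Type*} [NontriviallyNormedField 𝕜] (f : 𝕜 → 𝕜) (f' f'' s : 𝕜) : Prop :=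
  (∀ᶠ u in 𝓝 s, DifferentiableAt 𝕜 f u) ∧ deriv f s = f' ∧ HasDerivAt (deriv f) f'' s

namespace HasSecondDerivAt

variable {𝕜 : Type*} [NontriviallyNormedField 𝕜] {f g : 𝕜 → 𝕜} {f' f'' g' g'' s : 𝕜}

lemma of_eventually_hasDerivAt {d : 𝕜 → 𝕜} (hf : ∀ᶠ u in 𝓝 s, HasDerivAt f (d u) u)
    (hd : HasDerivAt d f'' s) : HasSecondDerivAt f (d s) f'' s :=
  ⟨hf.mono fun _ h => h.differentiableAt, hf.self_of_nhds.deriv,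
    hd.congr_of_eventuallyEq (hf.mono fun _ h => h.deriv)⟩

lemma eventually_hasDerivAt (h : HasSecondDerivAt f f' f'' s) :
    ∀ᶠ u in 𝓝 s, HasDerivAt f (deriv f u) u :=
  h.1.mono fun _ hu => hu.hasDerivAt

lemma deriv_eq (h : HasSecondDerivAt f f' f'' s) : deriv f s = f' := h.2.1

lemma hasDerivAt (h : HasSecondDerivAt f f' f'' s) : HasDerivAt f f' s :=
  h.deriv_eq ▸ h.1.self_of_nhds.hasDerivAt

lemma hasDerivAt_deriv (h : HasSecondDerivAt f f' f'' s) : HasDerivAt (deriv f) f'' s := h.2.2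

lemma deriv_deriv (h : HasSecondDerivAt f f' f'' s) : deriv (deriv f) s = f'' :=
  h.hasDerivAt_deriv.deriv

lemma congr_of_eventuallyEq (h : HasSecondDerivAt f f' f'' s) (hgf : g =ᶠ[𝓝 s] f) :
    HasSecondDerivAt g f' f'' s :=
  ⟨by filter_upwards [h.1, hgf.eventuallyEq_nhds] with u hu hgu using hgu.differentiableAt_iff.2 hu,
    hgf.deriv_eq.trans h.deriv_eq, h.hasDerivAt_deriv.congr_of_eventuallyEq hgf.deriv⟩

lemma congr_derivs {d' d'' : 𝕜} (h : HasSecondDerivAt f f' f'' s) (h' : f' = d')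
    (h'' : f'' = d'') : HasSecondDerivAt f d' d'' s :=
  h' ▸ h'' ▸ h

lemma const (c s : 𝕜) : HasSecondDerivAt (fun _ => c) 0 0 s :=
  of_eventually_hasDerivAt (.of_forall fun u => hasDerivAt_const u c) (hasDerivAt_const s 0)

lemma mul (hf : HasSecondDerivAt f f' f'' s) (hg : HasSecondDerivAt g g' g'' s) :
    HasSecondDerivAt (fun u => f u * g u) (f' * g s + f s * g')
      (f'' * g s + 2 * f' * g' + f s * g'') s := by
  have hfg : ∀ᶠ u in 𝓝 s,
      HasDerivAt (fun u => f u * g u) (deriv f u * g u + f u * deriv g u) u := by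
    filter_upwards [hf.eventually_hasDerivAt, hg.eventually_hasDerivAt] with u hfu hgu
      using hfu.fun_mul hgu
  have hd := (hf.hasDerivAt_deriv.fun_mul hg.hasDerivAt).fun_add
    (hf.hasDerivAt.fun_mul hg.hasDerivAt_deriv)
  refine (of_eventually_hasDerivAt hfg hd).congr_derivs ?_ ?_ <;> rw [hf.deriv_eq, hg.deriv_eq]
  ring

lemma const_mul (c : 𝕜) (hf : HasSecondDerivAt f f' f'' s) :
    HasSecondDerivAt (fun u => c * f u) (c * f') (c * f'') s := by
  simpa only [zero_mul, mul_zero, zero_add] using (const c s).mul hf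

lemma sq (hf : HasSecondDerivAt f f' f'' s) :
    HasSecondDerivAt (fun u => f u ^ 2) (2 * f s * f') (2 * (f' ^ 2 + f s * f'')) s := by
  simp only [pow_two]
  exact (hf.mul hf).congr_derivs (by ring) (by ring)

end HasSecondDerivAt

lemma eventually_differentiableAt_of_contDiffAt {𝕜 E E' : Type*} [NontriviallyNormedField 𝕜]
    [NormedAddCommGroup E] [NormedSpace 𝕜 E] [NormedAddCommGroup E'] [NormedSpace 𝕜 E']
    {f : E → E'} {x : E} (hf : ContDiffAt 𝕜 1 f x) : ∀ᶠ y in 𝓝 x, DifferentiableAt 𝕜 f y :=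
  (hf.eventually (by simp)).mono fun _ hy => hy.differentiableAt one_ne_zero

section PartialDerivatives

variable {F : ℝ × ℝ × ℝ → ℝ} {p : ℝ × ℝ × ℝ} {a b c : ℝ → ℝ}
  {a' a'' b' b'' c' c'' s : ℝ}

/-- The standard basis of `ℝ × ℝ × ℝ`, indexed like the partial derivatives `pd`. -/
def basisVec : Fin 3 → ℝ × ℝ × ℝ := ![(1, 0, 0), (0, 1, 0), (0, 0, 1)]

lemma pd_eq_fderiv (hF : DifferentiableAt ℝ F p) (i : Fin 3) :
    pd i F p = fderiv ℝ F p (basisVec i) := by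
  obtain ⟨x, y, z⟩ := p
  fin_cases i
  · exact (hF.hasFDerivAt.comp_hasDerivAt x
      ((hasDerivAt_id x).prodMk (hasDerivAt_const x (y, z)))).deriv
  · exact (hF.hasFDerivAt.comp_hasDerivAt y
      ((hasDerivAt_const y x).prodMk ((hasDerivAt_id y).prodMk (hasDerivAt_const y z)))).deriv
  · exact (hF.hasFDerivAt.comp_hasDerivAt z
      ((hasDerivAt_const z x).prodMk ((hasDerivAt_const z y).prodMk (hasDerivAt_id z)))).deriv

lemma hasFDerivAt_pd (hF : ContDiffAt ℝ 2 F p) (i : Fin 3) :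
    HasFDerivAt (pd i F) ((fderiv ℝ (fderiv ℝ F) p).flip (basisVec i)) p := by
  have hfderiv : HasFDerivAt (fderiv ℝ F) (fderiv ℝ (fderiv ℝ F) p) p :=
    ((hF.fderiv_right (m := 1) (by norm_num)).differentiableAt (by simp)).hasFDerivAt
  have hpd : pd i F =ᶠ[𝓝 p] fun q => fderiv ℝ F q (basisVec i) :=
    (eventually_differentiableAt_of_contDiffAt (hF.of_le one_le_two)).mono
      fun q hq => pd_eq_fderiv hq i
  refine HasFDerivAt.congr_of_eventuallyEq ?_ hpd
  simpa using hfderiv.clm_apply (hasFDerivAt_const (basisVec i) p)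

lemma pd_comm (hF : ContDiffAt ℝ 2 F p) (i j : Fin 3) : pd i (pd j F) p = pd j (pd i F) p := by
  have pd_pd : ∀ k l, pd k (pd l F) p = fderiv ℝ (fderiv ℝ F) p (basisVec k) (basisVec l) := by
    intro k l
    have hl := hasFDerivAt_pd hF l
    rw [pd_eq_fderiv hl.differentiableAt, hl.fderiv, ContinuousLinearMap.flip_apply]
  rw [pd_pd, pd_pd]
  exact hF.isSymmSndFDerivAt (by simp) _ _

lemma hasDerivAt_comp_triple (hF : DifferentiableAt ℝ F (a s, b s, c s))
    (ha : HasDerivAt a a' s) (hb : HasDerivAt b b' s) (hc : HasDerivAt c c' s) :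
    HasDerivAt (fun u => F (a u, b u, c u))
      (pd 0 F (a s, b s, c s) * a' + pd 1 F (a s, b s, c s) * b' + pd 2 F (a s, b s, c s) * c')
      s := by
  have hvec : (a', b', c') = a' • basisVec 0 + b' • basisVec 1 + c' • basisVec 2 := by
    simp [basisVec]
  refine (hF.hasFDerivAt.comp_hasDerivAt s (ha.prodMk (hb.prodMk hc))).congr_deriv ?_
  simp only [hvec, map_add, map_smul, smul_eq_mul, pd_eq_fderiv hF, mul_comm]

lemma HasSecondDerivAt.comp_triple (hF : ContDiffAt ℝ 2 F p) (hp : (a s, b s, c s) = p)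
    (ha : HasSecondDerivAt a a' a'' s) (hb : HasSecondDerivAt b b' b'' s)
    (hc : HasSecondDerivAt c c' c'' s) :
    HasSecondDerivAt (fun u => F (a u, b u, c u))
      (pd 0 F p * a' + pd 1 F p * b' + pd 2 F p * c')
      (pd 0 (pd 0 F) p * a' ^ 2 + pd 1 (pd 1 F) p * b' ^ 2 + pd 2 (pd 2 F) p * c' ^ 2
        + 2 * (pd 1 (pd 0 F) p * a' * b' + pd 2 (pd 0 F) p * a' * c' + pd 2 (pd 1 F) p * b' * c')
        + (pd 0 F p * a'' + pd 1 F p * b'' + pd 2 F p * c'')) s := by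
  subst hp
  have hcont : Tendsto (fun u => (a u, b u, c u)) (𝓝 s) (𝓝 (a s, b s, c s)) :=
    ha.hasDerivAt.continuousAt.prodMk
      (hb.hasDerivAt.continuousAt.prodMk hc.hasDerivAt.continuousAt)
  have hFdiff := hcont.eventually
    (eventually_differentiableAt_of_contDiffAt (hF.of_le one_le_two))
  have hfirst : ∀ᶠ u in 𝓝 s, HasDerivAt (fun u => F (a u, b u, c u))
      (pd 0 F (a u, b u, c u) * deriv a u + pd 1 F (a u, b u, c u) * deriv b u
        + pd 2 F (a u, b u, c u) * deriv c u) u := by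
    filter_upwards [hFdiff, ha.eventually_hasDerivAt, hb.eventually_hasDerivAt,
      hc.eventually_hasDerivAt] with u hFu hau hbu hcu
      using hasDerivAt_comp_triple hFu hau hbu hcu
  have hpd (i : Fin 3) := hasDerivAt_comp_triple (hasFDerivAt_pd hF i).differentiableAt
    ha.hasDerivAt hb.hasDerivAt hc.hasDerivAt
  have hsecond := (((hpd 0).fun_mul ha.hasDerivAt_deriv).fun_add
    ((hpd 1).fun_mul hb.hasDerivAt_deriv)).fun_add ((hpd 2).fun_mul hc.hasDerivAt_deriv)
  refine (of_eventually_hasDerivAt hfirst hsecond).congr_derivs ?_ ?_ <;>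
    rw [ha.deriv_eq, hb.deriv_eq, hc.deriv_eq]
  rw [pd_comm hF 0 1, pd_comm hF 0 2, pd_comm hF 1 2]
  ring

end PartialDerivatives

section Radial

variable {f : ℝ → ℝ} {f' f'' r : ℝ}

lemma hasDerivAt_const_div_sqrt (k : ℝ) (hr : 0 < r) :
    HasDerivAt (fun u => k / √u) (-(k / √r) / (2 * r)) r := by
  have hm : 0 < √r := Real.sqrt_pos.2 hr
  refine ((hasDerivAt_const r k).fun_div (Real.hasDerivAt_sqrt hr.ne') hm.ne').congr_deriv ?_
  rw [Real.sq_sqrt hr.le]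
  field_simp
  ring

lemma hasSecondDerivAt_const_div_sqrt (k : ℝ) (hr : 0 < r) :
    HasSecondDerivAt (fun u => k / √u) (-(k / √r) / (2 * r)) (3 * (k / √r) / (4 * r ^ 2)) r := by
  have hsecond := (hasDerivAt_const_div_sqrt k hr).fun_neg.fun_div
    ((hasDerivAt_id' r).const_mul 2) (by positivity)
  refine (HasSecondDerivAt.of_eventually_hasDerivAt
    ((lt_mem_nhds hr).mono fun u hu => hasDerivAt_const_div_sqrt k hu) hsecond).congr_derivs rfl ?_
  field_simp
  ring

lemma radialLaplacian_const_div_sqrt_mul (k : ℝ) (hr : 0 < r)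
    (hf : HasSecondDerivAt f f' f'' r) :
    deriv (deriv fun u => k / √u * f u) r + deriv (fun u => k / √u * f u) r / r =
      k / √r * (f'' + f r / (4 * r ^ 2)) := by
  have hprod := (hasSecondDerivAt_const_div_sqrt k hr).mul hf
  rw [hprod.deriv_deriv, hprod.deriv_eq]
  field_simp
  ring

end Radial

section Polar

variable {x y t : ℝ} {z₀ z v : ℂ} {ζ : ℝ → ℂ} {G : ℝ × ℝ × ℝ → ℝ}
  {p : ℝ × ℝ × ℝ}

lemma eventually_sq_add_sq_pos (h : 0 < x ^ 2 + y ^ 2) : ∀ᶠ u in 𝓝 x, 0 < u ^ 2 + y ^ 2 :=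
  (((continuous_pow 2).add_const (y ^ 2)).tendsto x).eventually_const_lt h

lemma hasDerivAt_radius (h : 0 < x ^ 2 + y ^ 2) :
    HasDerivAt (fun u => √(u ^ 2 + y ^ 2)) (x / √(x ^ 2 + y ^ 2)) x := by
  refine (((hasDerivAt_pow 2 x).add_const (y ^ 2)).sqrt h.ne').congr_deriv ?_
  field_simp
  ring

lemma hasSecondDerivAt_radius (h : 0 < x ^ 2 + y ^ 2) :
    HasSecondDerivAt (fun u => √(u ^ 2 + y ^ 2)) (x / √(x ^ 2 + y ^ 2))
      (y ^ 2 / √(x ^ 2 + y ^ 2) ^ 3) x := by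
  have hr : 0 < √(x ^ 2 + y ^ 2) := Real.sqrt_pos.2 h
  have hr2 : √(x ^ 2 + y ^ 2) ^ 2 = x ^ 2 + y ^ 2 := Real.sq_sqrt h.le
  refine (HasSecondDerivAt.of_eventually_hasDerivAt
    ((eventually_sq_add_sq_pos h).mono fun u hu => hasDerivAt_radius hu)
    ((hasDerivAt_id' x).fun_div (hasDerivAt_radius h) hr.ne')).congr_derivs rfl ?_
  field_simp
  linear_combination hr2

/-- The branch of the argument near `z₀` that agrees with `Complex.arg` at `z₀`; unlike
`Complex.arg`, it is smooth near `z₀` even on the negative real axis. -/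
def argBranch (z₀ z : ℂ) : ℝ := (z / z₀).arg + z₀.arg

lemma argBranch_self (hz₀ : z₀ ≠ 0) : argBranch z₀ z₀ = z₀.arg := by
  simp [argBranch, hz₀]

lemma exists_arg_eq_argBranch_add (hz₀ : z₀ ≠ 0) (hz : z ≠ 0) :
    ∃ k : ℤ, z.arg = argBranch z₀ z + k * (2 * Real.pi) := by
  have hangle : (z.arg : Real.Angle) = argBranch z₀ z := by
    rw [argBranch, Real.Angle.coe_add, ← Complex.arg_mul_coe_angle (div_ne_zero hz hz₀) hz₀,
      div_mul_cancel₀ z hz₀]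
  obtain ⟨k, hk⟩ := Real.Angle.angle_eq_iff_two_pi_dvd_sub.1 hangle
  exact ⟨k, by linear_combination hk⟩

lemma hasDerivAt_argBranch {s : ℝ} (hζ : HasDerivAt ζ v s) (hs : ζ s / z₀ ∈ Complex.slitPlane) :
    HasDerivAt (fun u => argBranch z₀ (ζ u)) (v / ζ s).im s := by
  have hz₀ : z₀ ≠ 0 := fun h => Complex.slitPlane_ne_zero hs (by simp [h])
  have hlog := Complex.imCLM.hasFDerivAt.comp_hasDerivAt s ((hζ.div_const z₀).clog_real hs)
  rw [div_div_div_cancel_right₀ hz₀] at hlog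
  simp only [Function.comp_def, Complex.imCLM_apply, Complex.log_im] at hlog
  exact hlog.add_const z₀.arg

lemma hasSecondDerivAt_argBranch {s : ℝ} (hζ : ∀ u, HasDerivAt ζ v u) (hs : ζ s ≠ 0) :
    HasSecondDerivAt (fun u => argBranch (ζ s) (ζ u)) (v / ζ s).im (-(v / ζ s) ^ 2).im s := by
  have hslit : ∀ᶠ u in 𝓝 s, ζ u / ζ s ∈ Complex.slitPlane :=
    ((hζ s).div_const (ζ s)).continuousAt.eventually_mem
      (Complex.isOpen_slitPlane.mem_nhds (by simp [hs]))
  refine (HasSecondDerivAt.of_eventually_hasDerivAt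
    (hslit.mono fun u hu => hasDerivAt_argBranch (hζ u) hu)
    (Complex.imCLM.hasFDerivAt.comp_hasDerivAt s
      ((hasDerivAt_const s v).fun_div (hζ s) hs))).congr_derivs rfl ?_
  rw [Complex.imCLM_apply]
  congr 1
  field_simp
  ring

/-- Polar coordinates in the two space variables: `(x₁, x₂, t) ↦ (r, α, t)`. -/
def toPolar (q : ℝ × ℝ × ℝ) : ℝ × ℝ × ℝ :=
  (√(q.1 ^ 2 + q.2.1 ^ 2), polarAngle (q.1, q.2.1), q.2.2)

lemma ofReal_add_mul_I_ne_zero (h : 0 < x ^ 2 + y ^ 2) : (x + y * Complex.I : ℂ) ≠ 0 := by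
  rwa [← Complex.normSq_pos, Complex.normSq_add_mul_I]

lemma inv_ofReal_add_mul_I (x y : ℝ) :
    (x + y * Complex.I : ℂ)⁻¹ = ⟨x / (x ^ 2 + y ^ 2), -y / (x ^ 2 + y ^ 2)⟩ := by
  apply Complex.ext <;> simp [Complex.normSq_add_mul_I]

lemma hasSecondDerivAt_argBranch_re (h : 0 < x ^ 2 + y ^ 2) :
    HasSecondDerivAt (fun u : ℝ => argBranch (x + y * Complex.I) (u + y * Complex.I))
      (-y / (x ^ 2 + y ^ 2)) (2 * x * y / (x ^ 2 + y ^ 2) ^ 2) x := by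
  have hline (u : ℝ) : HasDerivAt (fun u : ℝ => (u + y * Complex.I : ℂ)) 1 u :=
    (Complex.ofRealCLM.hasDerivAt (x := u)).add_const _
  refine (hasSecondDerivAt_argBranch hline (ofReal_add_mul_I_ne_zero h)).congr_derivs ?_ ?_ <;>
    simp only [one_div, inv_ofReal_add_mul_I, pow_two, Complex.neg_im, Complex.mul_im]
  field_simp
  ring

lemma hasSecondDerivAt_argBranch_im (h : 0 < x ^ 2 + y ^ 2) :
    HasSecondDerivAt (fun u : ℝ => argBranch (x + y * Complex.I) (x + u * Complex.I))
      (x / (x ^ 2 + y ^ 2)) (-(2 * x * y) / (x ^ 2 + y ^ 2) ^ 2) y := by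
  have hline (u : ℝ) : HasDerivAt (fun u : ℝ => (x + u * Complex.I : ℂ)) Complex.I u := by
    simpa using ((Complex.ofRealCLM.hasDerivAt (x := u)).mul_const Complex.I).const_add (x : ℂ)
  refine (hasSecondDerivAt_argBranch hline (ofReal_add_mul_I_ne_zero h)).congr_derivs ?_ ?_ <;>
    simp only [div_eq_mul_inv Complex.I, inv_ofReal_add_mul_I, pow_two, Complex.neg_im,
      Complex.mul_im, Complex.mul_re, Complex.I_re, Complex.I_im] <;>
    field_simp <;> ring

lemma comp_toPolar_eq (hG : ∀ r α t, G (r, α + 2 * Real.pi, t) = G (r, α, t)) (hz₀ : z₀ ≠ 0)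
    (hxy : 0 < x ^ 2 + y ^ 2) :
    G (toPolar (x, y, t)) = G (√(x ^ 2 + y ^ 2), argBranch z₀ (x + y * Complex.I), t) := by
  have hperiodic : Function.Periodic (fun α => G (√(x ^ 2 + y ^ 2), α, t)) (2 * Real.pi) :=
    fun α => hG _ α t
  obtain ⟨k, hk⟩ := exists_arg_eq_argBranch_add hz₀ (ofReal_add_mul_I_ne_zero hxy)
  rw [toPolar, polarAngle, hk]
  exact hperiodic.int_mul k _

lemma toPolar_eq_argBranch (h : 0 < x ^ 2 + y ^ 2) :
    (√(x ^ 2 + y ^ 2), argBranch (x + y * Complex.I) (x + y * Complex.I), t) =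
      toPolar (x, y, t) := by
  rw [argBranch_self (ofReal_add_mul_I_ne_zero h), toPolar, polarAngle]

lemma toPolar_fst_pos (h : 0 < x ^ 2 + y ^ 2) (hp : toPolar (x, y, t) = p) : 0 < p.1 :=
  hp ▸ Real.sqrt_pos.2 h

lemma toPolar_fst_sq (hp : toPolar (x, y, t) = p) : p.1 ^ 2 = x ^ 2 + y ^ 2 :=
  hp ▸ Real.sq_sqrt (by positivity)

lemma pd_zero_pd_zero_comp_toPolar (h : 0 < x ^ 2 + y ^ 2) (hp : toPolar (x, y, t) = p)
    (hG : ContDiffAt ℝ 2 G p) (hper : ∀ r α t, G (r, α + 2 * Real.pi, t) = G (r, α, t)) :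
    pd 0 (pd 0 fun q => G (toPolar q)) (x, y, t) =
      x ^ 2 / p.1 ^ 2 * pd 0 (pd 0 G) p - 2 * x * y / p.1 ^ 3 * pd 1 (pd 0 G) p
        + y ^ 2 / p.1 ^ 4 * pd 1 (pd 1 G) p + y ^ 2 / p.1 ^ 3 * pd 0 G p
        + 2 * x * y / p.1 ^ 4 * pd 1 G p := by
  have hslice := (HasSecondDerivAt.comp_triple hG ((toPolar_eq_argBranch h).trans hp)
    (hasSecondDerivAt_radius h) (hasSecondDerivAt_argBranch_re h)
    (.const t x)).congr_of_eventuallyEq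
      ((eventually_sq_add_sq_pos h).mono fun u hu =>
        comp_toPolar_eq hper (ofReal_add_mul_I_ne_zero h) hu)
  refine hslice.deriv_deriv.trans ?_
  have hr : 0 < p.1 := toPolar_fst_pos h hp
  have hsqrt : √(x ^ 2 + y ^ 2) = p.1 := congrArg Prod.fst hp
  rw [hsqrt, ← toPolar_fst_sq hp]
  field_simp
  ring

lemma pd_one_pd_one_comp_toPolar (h : 0 < x ^ 2 + y ^ 2) (hp : toPolar (x, y, t) = p)
    (hG : ContDiffAt ℝ 2 G p) (hper : ∀ r α t, G (r, α + 2 * Real.pi, t) = G (r, α, t)) :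
    pd 1 (pd 1 fun q => G (toPolar q)) (x, y, t) =
      y ^ 2 / p.1 ^ 2 * pd 0 (pd 0 G) p + 2 * x * y / p.1 ^ 3 * pd 1 (pd 0 G) p
        + x ^ 2 / p.1 ^ 4 * pd 1 (pd 1 G) p + x ^ 2 / p.1 ^ 3 * pd 0 G p
        - 2 * x * y / p.1 ^ 4 * pd 1 G p := by
  have h' : 0 < y ^ 2 + x ^ 2 := add_comm (x ^ 2) (y ^ 2) ▸ h
  have hpos := eventually_sq_add_sq_pos h'
  have hradius := hasSecondDerivAt_radius h'
  simp only [add_comm _ (x ^ 2)] at hpos hradius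
  have hslice := (HasSecondDerivAt.comp_triple hG ((toPolar_eq_argBranch h).trans hp)
    hradius (hasSecondDerivAt_argBranch_im h) (.const t y)).congr_of_eventuallyEq
      (hpos.mono fun u hu => comp_toPolar_eq hper (ofReal_add_mul_I_ne_zero h) hu)
  refine hslice.deriv_deriv.trans ?_
  have hr : 0 < p.1 := toPolar_fst_pos h hp
  have hsqrt : √(x ^ 2 + y ^ 2) = p.1 := congrArg Prod.fst hp
  rw [hsqrt, ← toPolar_fst_sq hp]
  field_simp
  ring

lemma laplacian_comp_toPolar (h : 0 < x ^ 2 + y ^ 2) (hp : toPolar (x, y, t) = p)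
    (hG : ContDiffAt ℝ 2 G p) (hper : ∀ r α t, G (r, α + 2 * Real.pi, t) = G (r, α, t)) :
    pd 0 (pd 0 fun q => G (toPolar q)) (x, y, t) + pd 1 (pd 1 fun q => G (toPolar q)) (x, y, t) =
      pd 0 (pd 0 G) p + pd 0 G p / p.1 + pd 1 (pd 1 G) p / p.1 ^ 2 := by
  have hr : 0 < p.1 := toPolar_fst_pos h hp
  have hy2 : y ^ 2 = p.1 ^ 2 - x ^ 2 := by rw [toPolar_fst_sq hp, add_sub_cancel_left]
  rw [pd_zero_pd_zero_comp_toPolar h hp hG hper, pd_one_pd_one_comp_toPolar h hp hG hper, hy2]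
  field_simp
  ring

lemma Pop_comp_toPolar (h : 0 < x ^ 2 + y ^ 2) (hp : toPolar (x, y, t) = p)
    (hG : ContDiffAt ℝ 2 G p) (hper : ∀ r α t, G (r, α + 2 * Real.pi, t) = G (r, α, t)) :
    Pop (fun q => G (toPolar q)) (x, y, t) =
      pd 2 (pd 2 G) p - (pd 0 (pd 0 G) p + pd 0 G p / p.1 + pd 1 (pd 1 G) p / p.1 ^ 2)
        - 1 / 2 * pd 2 (pd 2 fun q => G q ^ 2) p := by
  rw [Pop, laplacian_comp_toPolar h hp hG hper, ← hp]
  rfl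

end Polar

section Ansatz

variable {ε r α t : ℝ} {F : ℝ × ℝ × ℝ → ℝ} {p : ℝ × ℝ × ℝ}

/-- The ansatz `(ε / r ^ (1/2)) F(r - t, α, ε t ^ (1/2))` with profile `F`, as a function of the
polar coordinates `(r, α, t)`. -/
def ansatz (ε : ℝ) (F : ℝ × ℝ × ℝ → ℝ) (q : ℝ × ℝ × ℝ) : ℝ :=
  ε / √q.1 * F (q.1 - q.2.2, q.2.1, ε * √q.2.2)

lemma contDiffAt_ansatz (hr : 0 < r) (ht : 0 < t) (hF : ContDiffAt ℝ 2 F (r - t, α, ε * √t)) :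
    ContDiffAt ℝ 2 (ansatz ε F) (r, α, t) := by
  have hamplitude : ContDiffAt ℝ 2 (fun q : ℝ × ℝ × ℝ => ε / √q.1) (r, α, t) :=
    contDiffAt_const.div (contDiffAt_fst.sqrt hr.ne') (Real.sqrt_pos.2 hr).ne'
  have hτ : ContDiffAt ℝ 2 (fun q : ℝ × ℝ × ℝ => ε * √q.2.2) (r, α, t) :=
    contDiffAt_const.mul (contDiffAt_snd.snd.sqrt ht.ne')
  exact hamplitude.mul (hF.comp (r, α, t)
    ((contDiffAt_fst.sub contDiffAt_snd.snd).prodMk (contDiffAt_snd.fst.prodMk hτ)))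

lemma ansatz_add_two_pi (hper : ∀ σ α τ, F (σ, α + 2 * Real.pi, τ) = F (σ, α, τ)) (r α t : ℝ) :
    ansatz ε F (r, α + 2 * Real.pi, t) = ansatz ε F (r, α, t) := by
  simp only [ansatz, hper]

lemma radialLaplacian_ansatz (hr : 0 < r) (hp : (r - t, α, ε * √t) = p)
    (hF : ContDiffAt ℝ 2 F p) :
    pd 0 (pd 0 (ansatz ε F)) (r, α, t) + pd 0 (ansatz ε F) (r, α, t) / r =
      ε / √r * (pd 0 (pd 0 F) p + F p / (4 * r ^ 2)) := by
  have hσ : HasSecondDerivAt (fun u => u - t) 1 0 r :=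
    .of_eventually_hasDerivAt (.of_forall fun u => (hasDerivAt_id' u).sub_const t)
      (hasDerivAt_const r 1)
  have hF' := HasSecondDerivAt.comp_triple hF hp hσ (.const α r) (.const (ε * √t) r)
  refine (radialLaplacian_const_div_sqrt_mul ε hr hF').trans ?_
  rw [hp]
  ring

lemma pd_one_pd_one_ansatz (hp : (r - t, α, ε * √t) = p) (hF : ContDiffAt ℝ 2 F p) :
    pd 1 (pd 1 (ansatz ε F)) (r, α, t) = ε / √r * pd 1 (pd 1 F) p := by
  have hid : HasSecondDerivAt (fun u : ℝ => u) 1 0 α :=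
    .of_eventually_hasDerivAt (.of_forall hasDerivAt_id') (hasDerivAt_const α 1)
  have hF' := HasSecondDerivAt.comp_triple hF hp (.const (r - t) α) hid (.const (ε * √t) α)
  refine (hF'.const_mul (ε / √r)).deriv_deriv.trans ?_
  ring

/-- The first time derivative of `F(r - t, α, ε t ^ (1/2))`, in the variables `(σ, α, τ)`. -/
def profileTimeDeriv (ε : ℝ) (F : ℝ × ℝ × ℝ → ℝ) (p : ℝ × ℝ × ℝ) : ℝ :=
  ε ^ 2 / (2 * p.2.2) * pd 2 F p - pd 0 F p

/-- The second time derivative of `F(r - t, α, ε t ^ (1/2))`, in the variables `(σ, α, τ)`. -/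
def profileTimeDeriv₂ (ε : ℝ) (F : ℝ × ℝ × ℝ → ℝ) (p : ℝ × ℝ × ℝ) : ℝ :=
  pd 0 (pd 0 F) p
    - ε ^ 2 / p.2.2 * (pd 2 (pd 0 F) p - ε ^ 2 / (4 * p.2.2) * pd 2 (pd 2 F) p)
    - ε ^ 4 / (4 * p.2.2 ^ 3) * pd 2 F p

lemma hasSecondDerivAt_sqrt (ht : 0 < t) :
    HasSecondDerivAt Real.sqrt (1 / (2 * √t)) (-1 / (4 * √t ^ 3)) t := by
  have hsecond := (hasDerivAt_const t (1 : ℝ)).fun_div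
    ((Real.hasDerivAt_sqrt ht.ne').const_mul 2) (by positivity)
  refine (HasSecondDerivAt.of_eventually_hasDerivAt
    ((lt_mem_nhds ht).mono fun u hu => Real.hasDerivAt_sqrt hu.ne') hsecond).congr_derivs rfl ?_
  field_simp
  ring

lemma hasSecondDerivAt_ansatz_time (ht : 0 < t) (hp : (r - t, α, ε * √t) = p)
    (hF : ContDiffAt ℝ 2 F p) :
    HasSecondDerivAt (fun u => ansatz ε F (r, α, u)) (ε / √r * profileTimeDeriv ε F p)
      (ε / √r * profileTimeDeriv₂ ε F p) t := by
  have hσ : HasSecondDerivAt (fun u => r - u) (-1) 0 t :=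
    .of_eventually_hasDerivAt (.of_forall fun u => (hasDerivAt_id' u).const_sub r)
      (hasDerivAt_const t (-1))
  have hF' := HasSecondDerivAt.comp_triple hF hp hσ (.const α t)
    ((hasSecondDerivAt_sqrt ht).const_mul ε)
  have hτ : p.2.2 = ε * √t := by rw [← hp]
  refine (hF'.congr_derivs ?_ ?_).const_mul (ε / √r)
  · rw [profileTimeDeriv, hτ]
    field_simp
    ring
  · rw [profileTimeDeriv₂, hτ]
    field_simp
    ring

lemma Pop_ansatz {x y : ℝ} (h : 0 < x ^ 2 + y ^ 2) (ht : 0 < t)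
    (hpolar : toPolar (x, y, t) = (r, α, t)) (hp : (r - t, α, ε * √t) = p)
    (hF : ContDiffAt ℝ 2 F p)
    (hper : ∀ σ α τ, F (σ, α + 2 * Real.pi, τ) = F (σ, α, τ)) :
    Pop (fun q => ansatz ε F (toPolar q)) (x, y, t) =
      ε / √r * (profileTimeDeriv₂ ε F p - pd 0 (pd 0 F) p
          - (pd 1 (pd 1 F) p + F p / 4) / r ^ 2)
        - (ε / √r) ^ 2 * (profileTimeDeriv ε F p ^ 2 + F p * profileTimeDeriv₂ ε F p) := by
  have hr : 0 < r := toPolar_fst_pos h hpolar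
  have hansatz := contDiffAt_ansatz hr ht (hp ▸ hF)
  have htime := hasSecondDerivAt_ansatz_time ht hp hF
  have hlin : pd 2 (pd 2 (ansatz ε F)) (r, α, t) = _ := htime.deriv_deriv
  have hsq : pd 2 (pd 2 fun q => ansatz ε F q ^ 2) (r, α, t) = _ := htime.sq.deriv_deriv
  rw [Pop_comp_toPolar h hpolar hansatz (ansatz_add_two_pi hper),
    radialLaplacian_ansatz hr hp hF, pd_one_pd_one_ansatz hp hF, hlin, hsq, ansatz, hp]
  ring

end Ansatz

/-- The coefficient `h₃ = -(R ^ (1/2) - ε² F) / (4 τ³)` of `F_τ`, at `q = (ε, α, R, τ, F)`. -/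
def coeffTau (q : ℝ × ℝ × ℝ × ℝ × ℝ) : ℝ :=
  -(√q.2.2.1 - q.1 ^ 2 * q.2.2.2.2) / (4 * q.2.2.2.1 ^ 3)

/-- The zeroth-order coefficient `h₀ = -R ^ (-3/2) F / 4`, at `q = (ε, α, R, τ, F)`. -/
def coeffZero (q : ℝ × ℝ × ℝ × ℝ × ℝ) : ℝ :=
  -(q.2.2.1 ^ (-(3 : ℝ) / 2) * q.2.2.2.2 / 4)

lemma smoothCoeff_zero : SmoothCoeff 0 :=
  ⟨contDiffOn_const, fun _ _ _ _ _ => rfl⟩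

lemma smoothCoeff_coeffTau : SmoothCoeff coeffTau := by
  refine ⟨fun q ⟨_, hR, hτ⟩ => ContDiffAt.contDiffWithinAt ?_, fun _ _ _ _ _ => rfl⟩
  have hsqrt : ContDiffAt ℝ (⊤ : ℕ∞) (fun q : ℝ × ℝ × ℝ × ℝ × ℝ => √q.2.2.1) q :=
    contDiffAt_snd.snd.fst.sqrt hR.ne'
  exact (hsqrt.sub (by fun_prop)).neg.div (by fun_prop) (by positivity)

lemma smoothCoeff_coeffZero : SmoothCoeff coeffZero :=
  ⟨fun _ ⟨_, hR, _⟩ => (((contDiffAt_snd.snd.fst.rpow_const_of_ne hR.ne').mul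
    (by fun_prop)).div_const 4).neg.contDiffWithinAt, fun _ _ _ _ _ => rfl⟩

lemma sq_rpow_neg_three_div_two {a : ℝ} (ha : 0 ≤ a) : (a ^ 2) ^ (-(3 : ℝ) / 2) = (a ^ 3)⁻¹ := by
  rw [← Real.rpow_natCast_mul ha, ← Real.rpow_natCast a 3, ← Real.rpow_neg ha]
  norm_num

theorem normalized_equation_general {ε : ℝ} (hε : 0 < ε) {F : ℝ × ℝ × ℝ → ℝ}
    (hper : ∀ σ α τ, F (σ, α + 2 * Real.pi, τ) = F (σ, α, τ)) {x₁ x₂ t : ℝ}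
    (hx : (x₁, x₂) ≠ (0, 0)) (ht : 0 < t)
    (hF : ContDiffAt ℝ 2 F (√(x₁ ^ 2 + x₂ ^ 2) - t, polarAngle (x₁, x₂), ε * √t)) :
    √(x₁ ^ 2 + x₂ ^ 2) / ε ^ 2 * Pop (fun q => ansatz ε F (toPolar q)) (x₁, x₂, t) =
      Ptilde 0 0 coeffTau coeffZero ε F
        (√(x₁ ^ 2 + x₂ ^ 2) - t, polarAngle (x₁, x₂), ε * √t) := by
  have h : 0 < x₁ ^ 2 + x₂ ^ 2 := by
    rcases not_and_or.1 (Prod.mk_inj.not.1 hx) with hx₁ | hx₂ <;> positivity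
  rw [Pop_ansatz h ht rfl rfl hF hper]
  have hr : 0 < √(x₁ ^ 2 + x₂ ^ 2) := Real.sqrt_pos.2 h
  generalize √(x₁ ^ 2 + x₂ ^ 2) = r at *
  have hm : 0 < √r := Real.sqrt_pos.2 hr
  have hm2 : √r ^ 2 = r := Real.sq_sqrt hr.le
  have hR : (ε * √t) ^ 2 + ε ^ 2 * (r - t) = (ε * √r) ^ 2 := by
    rw [mul_pow, mul_pow, Real.sq_sqrt ht.le, hm2]
    ring
  simp only [Ptilde, coeffTau, coeffZero, profileTimeDeriv, profileTimeDeriv₂, hR,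
    Real.sqrt_sq (mul_pos hε hm).le, sq_rpow_neg_three_div_two (mul_pos hε hm).le, Pi.zero_apply]
  generalize √r = m at *
  subst hm2
  field_simp
  ring

/-- **Lemma II.2**: there exist smooth functions `h₁, h₂, h₃, h₀` of `(ε, α, R, τ, F)`,
`2π`-periodic in `α`, such that for `w = (ε/r^{1/2}) F(r − t, α, ε t^{1/2})` one has the
identity `(r/ε²) P(w) = P̃(F)` at every point with `r > 0`, `t > 0`. -/
theorem normalized_equation :
    ∃ h1 h2 h3 h0 : ℝ × ℝ × ℝ × ℝ × ℝ → ℝ,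
      SmoothCoeff h1 ∧ SmoothCoeff h2 ∧ SmoothCoeff h3 ∧ SmoothCoeff h0 ∧
      ∀ ε : ℝ, 0 < ε → ε ≤ 1 →
        ∀ F : ℝ × ℝ × ℝ → ℝ,
          ContDiffOn ℝ (⊤ : ℕ∞) F {q : ℝ × ℝ × ℝ | 0 < q.2.2} →
          (∀ σ α τ : ℝ, F (σ, α + 2 * Real.pi, τ) = F (σ, α, τ)) →
          ∀ x₁ x₂ t : ℝ, (x₁, x₂) ≠ (0, 0) → 0 < t →
            (Real.sqrt (x₁ ^ 2 + x₂ ^ 2) / ε ^ 2) *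
              Pop (fun q : ℝ × ℝ × ℝ =>
                  ε / Real.sqrt (Real.sqrt (q.1 ^ 2 + q.2.1 ^ 2)) *
                    F (Real.sqrt (q.1 ^ 2 + q.2.1 ^ 2) - q.2.2,
                      polarAngle (q.1, q.2.1), ε * Real.sqrt q.2.2))
                (x₁, x₂, t) =
            Ptilde h1 h2 h3 h0 ε F
              (Real.sqrt (x₁ ^ 2 + x₂ ^ 2) - t, polarAngle (x₁, x₂),
                ε * Real.sqrt t) :=
  ⟨0, 0, coeffTau, coeffZero, smoothCoeff_zero, smoothCoeff_zero, smoothCoeff_coeffTau,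
    smoothCoeff_coeffZero, fun _ hε _ _ hF hper _ _ _ hx ht =>
      normalized_equation_general hε hper hx ht
        ((hF.contDiffAt ((isOpen_lt continuous_const continuous_snd.snd).mem_nhds
          (mul_pos hε (Real.sqrt_pos.2 ht)))).of_le ENat.LEInfty.out)⟩

end
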